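/- arXiv:1202.3567 — 6 statements merged into one kernel-verified Lean document; each statement's English description precedes it below -/
import Mathlib

section
/- Let k be a field of characteristic 0, let a ∈ k be a non-square, and let K be a finite extension of k containing an element α with α² = a; set L = k(α) ⊆ K. Let c ∈ k be nonzero, and let t ∈ k with t² ≠ a and z ∈ K satisfy c·(t² − a) = N_{K/k}(z). Then the element w = (t − α)⁻¹ · N_{K/L}(z) of L satisfies N_{L/k}(w) = c. (Well-definedness of the fibration U → S in the proof of Theorem 1.) -/
open IntermediateField

/-- Well-definedness of the fibration `U → S` in the proof of Theorem 1
(Derenthal–Smeets–Wei): if `c(t² − a) = N_{K/k}(z)` with `t² ≠ a`, then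
`w = (t − α)⁻¹ N_{K/L}(z) ∈ L = k(α)` satisfies `N_{L/k}(w) = c`. -/
theorem norm_of_fibration_map (k K : Type) [Field k] [CharZero k] [Field K]
    [Algebra k K] [FiniteDimensional k K]
    (a : k) (ha : ¬∃ x : k, x ^ 2 = a)
    (α : K) (hα : α ^ 2 = algebraMap k K a)
    (c : k) (hc : c ≠ 0)
    (t : k) (ht : t ^ 2 ≠ a)
    (z : K) (hz : c * (t ^ 2 - a) = Algebra.norm k z) :
    Algebra.norm k
      ((⟨algebraMap k K t - α,
          sub_mem (IntermediateField.algebraMap_mem _ t)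
            (IntermediateField.mem_adjoin_simple_self k α)⟩ : k⟮α⟯)⁻¹ *
        Algebra.norm (↥k⟮α⟯) z) = c := by
  have hint : IsIntegral k α := IsIntegral.of_finite k α
  have hmin : minpoly k α = Polynomial.X ^ 2 - Polynomial.C a := by
    symm
    apply minpoly.eq_of_irreducible_of_monic
    · refine Polynomial.irreducible_of_degree_le_three_of_not_isRoot ?_ ?_
      · rw [Polynomial.natDegree_X_pow_sub_C]; decide
      · intro x hx
        apply ha
        refine ⟨x, ?_⟩
        simpa [sub_eq_zero] using hx
    · simp [hα]
    · exact Polynomial.monic_X_pow_sub_C a two_ne_zero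
  have key : Algebra.norm k (⟨algebraMap k K t - α,
          sub_mem (IntermediateField.algebraMap_mem _ t)
            (IntermediateField.mem_adjoin_simple_self k α)⟩ : k⟮α⟯) = t ^ 2 - a := by
    have h1 := charpoly_leftMulMatrix (IntermediateField.adjoin.powerBasis hint)
    rw [IntermediateField.adjoin.powerBasis_gen, IntermediateField.minpoly_gen, hmin] at h1
    have h2 := congrArg (Polynomial.eval t) h1
    rw [Matrix.eval_charpoly] at h2
    have h3 : (⟨algebraMap k K t - α,
          sub_mem (IntermediateField.algebraMap_mem _ t)
            (IntermediateField.mem_adjoin_simple_self k α)⟩ : k⟮α⟯)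
        = algebraMap k k⟮α⟯ t - IntermediateField.AdjoinSimple.gen k α := by
      ext; simp
    rw [h3, Algebra.norm_eq_matrix_det (IntermediateField.adjoin.powerBasis hint).basis,
      map_sub, AlgHom.commutes]
    simpa [Matrix.algebraMap_eq_diagonal, Pi.algebraMap_def] using h2
  have hne : t ^ 2 - a ≠ 0 := sub_ne_zero.mpr ht
  generalize (⟨algebraMap k K t - α, _⟩ : k⟮α⟯) = u at key ⊢
  have hu : u ≠ 0 := by
    rintro rfl
    exact hne (key.symm.trans Algebra.norm_zero)
  have hinv : Algebra.norm k u⁻¹ * (t ^ 2 - a) = 1 := by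
    rw [← key, ← map_mul, inv_mul_cancel₀ hu, map_one]
  rw [map_mul, Algebra.norm_norm, ← hz]
  linear_combination c * hinv
end

section
/- Let K/k be a quartic extension of fields of characteristic 0 which contains a quadratic subextension L = k(α) with α² = a ∈ k, a not a square in k. Take β ∈ K with K = L(β), so that (1, α, β, αβ) is a k-basis of K. Let ρ ∈ L be nonzero. Define maps f₀, f₁ : k⁴ → k by ρ · N_{K/L}((y₁ + y₂α) + (y₃ + y₄α)β) = f₀(y₁,…,y₄) + f₁(y₁,…,y₄)·α for all (y₁,…,y₄) ∈ k⁴. Then f₀ and f₁ are quadratic forms on k⁴ of rank 4; that is, the associated symmetric bilinear forms of f₀ and of f₁ are nondegenerate. (Lemma 2.2.) -/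
open IntermediateField

theorem aux_basis {F E : Type*} [Field F] [Field E] [Algebra F E]
    (h2 : Module.finrank F E = 2) (x : E) (hx : x ∉ (algebraMap F E).range) :
    ∃ b : Module.Basis (Fin 2) F E, b 0 = 1 ∧ b 1 = x := by
  have li : LinearIndependent F ![(1 : E), x] := by
    rw [LinearIndependent.pair_iff' one_ne_zero]
    intro c hc
    exact hx ⟨c, by rw [Algebra.algebraMap_eq_smul_one, hc]⟩
  refine ⟨basisOfLinearIndependentOfCardEqFinrank li (by simp [h2]), ?_, ?_⟩ <;> simp

theorem aux_norm {F E : Type*} [Field F] [CharZero F] [Field E] [Algebra F E]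
    (h2 : Module.finrank F E = 2) (x : E) (hx : x ∉ (algebraMap F E).range) :
    ∃ t n : F, t ^ 2 - 4 * n ≠ 0 ∧ ∀ u v : F,
      Algebra.norm F (algebraMap F E u + algebraMap F E v * x) = u ^ 2 + t * (u * v) + n * v ^ 2 := by
  obtain ⟨b, hb0, hb1⟩ := aux_basis h2 x hx
  have hxx := b.sum_repr (x * x)
  rw [Fin.sum_univ_two, hb0, hb1] at hxx
  generalize b.repr (x * x) 0 = q at hxx
  generalize b.repr (x * x) 1 = p at hxx
  refine ⟨p, -q, ?_, ?_⟩
  · intro h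
    apply hx
    refine ⟨p / 2, ?_⟩
    have h1 : (x - algebraMap F E (p / 2)) ^ 2 = 0 := by
      have hq : q = - (p / 2) ^ 2 := by linear_combination (1 / 4) * h
      have hp : p = 2 * (p / 2) := by ring
      generalize p / 2 = r at *
      subst hp
      subst hq
      simp only [Algebra.smul_def, map_neg, map_pow, map_mul, map_ofNat] at hxx
      linear_combination -hxx
    have h3 := pow_eq_zero_iff (two_ne_zero) |>.1 h1
    exact (sub_eq_zero.1 h3).symm
  · intro u v
    have e0 : (algebraMap F E u + algebraMap F E v * x) * b 0 = u • b 0 + v • b 1 := by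
      rw [hb0, hb1]; simp [Algebra.smul_def]
    have e1 : (algebraMap F E u + algebraMap F E v * x) * b 1
        = (v * q) • b 0 + (u + v * p) • b 1 := by
      rw [hb0, hb1]; simp only [Algebra.smul_def, map_mul, map_add] at hxx ⊢
      linear_combination - algebraMap F E v * hxx
    rw [Algebra.norm_eq_matrix_det b, Matrix.det_fin_two]
    simp only [Algebra.leftMulMatrix_eq_repr_mul, e0, e1]
    simp
    ring

theorem aux_transfer {k L V : Type*} [Field k] [Field L] [CharZero L] [Algebra k L]
    [AddCommGroup V] [Module k V] (u v : V →ₗ[k] L)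
    (hsurj : ∀ z w : L, ∃ y, u y = z ∧ v y = w)
    (hinj : ∀ y, u y = 0 → v y = 0 → y = 0)
    (t n ρ : L) (hd : t ^ 2 - 4 * n ≠ 0) (hρ : ρ ≠ 0) (s : L →ₗ[k] k) (hs : s ≠ 0) :
    ∃ Q : QuadraticForm k V,
      (∀ y, Q y = s (ρ * (u y ^ 2 + t * (u y * v y) + n * v y ^ 2))) ∧
      Q.polarBilin.Nondegenerate := by
  let Q : QuadraticForm k V := (s ∘ₗ LinearMap.mulLeft k ρ).compQuadraticMap
    (QuadraticMap.linMulLin u u + QuadraticMap.linMulLin (LinearMap.mulLeft k t ∘ₗ u) v +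
      QuadraticMap.linMulLin (LinearMap.mulLeft k n ∘ₗ v) v)
  have hQ : ∀ y, Q y = s (ρ * (u y ^ 2 + t * (u y * v y) + n * v y ^ 2)) := by
    intro y
    simp only [Q, LinearMap.compQuadraticMap_apply, add_apply,
      QuadraticMap.linMulLin_apply, LinearMap.comp_apply, LinearMap.mulLeft_apply]
    congr 1; ring
  have hpol : ∀ y z, Q.polarBilin y z =
      s (ρ * ((2 * u y + t * v y) * u z + (t * u y + 2 * n * v y) * v z)) := by
    intro y z
    rw [QuadraticMap.polarBilin_apply_apply, QuadraticMap.polar, hQ, hQ, hQ, ← map_sub, ← map_sub]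
    congr 1
    simp only [map_add]
    ring
  have hz : ∀ c : L, (∀ z, s (ρ * (c * z)) = 0) → c = 0 := by
    intro c hc
    by_contra h
    apply hs
    ext z
    have := hc (ρ⁻¹ * c⁻¹ * z)
    rwa [show ρ * (c * (ρ⁻¹ * c⁻¹ * z)) = z by field_simp] at this
  have hleft : ∀ y, (∀ z, Q.polarBilin y z = 0) → y = 0 := by
    intro y hy
    have h1 : 2 * u y + t * v y = 0 := by
      apply hz
      intro z
      obtain ⟨w, hw1, hw2⟩ := hsurj z 0
      have := hy w
      rwa [hpol, hw1, hw2, mul_zero, add_zero] at this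
    have h2 : t * u y + 2 * n * v y = 0 := by
      apply hz
      intro z
      obtain ⟨w, hw1, hw2⟩ := hsurj 0 z
      have := hy w
      rwa [hpol, hw1, hw2, mul_zero, zero_add] at this
    have hv : v y = 0 := by
      have : (t ^ 2 - 4 * n) * v y = 0 := by linear_combination t * h1 - 2 * h2
      exact (mul_eq_zero.1 this).resolve_left hd
    have hu : u y = 0 := by
      rw [hv, mul_zero, add_zero] at h1
      exact (mul_eq_zero.1 h1).resolve_left two_ne_zero
    exact hinj y hu hv
  refine ⟨Q, hQ, ⟨hleft, fun y hy => hleft y fun z => ?_⟩⟩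
  rw [← hy z, QuadraticMap.polarBilin_apply_apply, QuadraticMap.polarBilin_apply_apply,
    QuadraticMap.polar_comm]

/-- **Lemma 2.2** (Derenthal–Smeets–Wei): let `K/k` be a quartic extension of fields of
characteristic `0` containing the quadratic subextension `L = k(α)`, `α² = a` a
non-square, and `K = L(β)`. If `ρ ∈ L^×` and
`ρ·N_{K/L}((y₁ + y₂α) + (y₃ + y₄α)β) = f₀(y) + f₁(y)·α`, then `f₀` and `f₁` are
quadratic forms on `k⁴` of rank 4, i.e. their polar symmetric bilinear forms are
nondegenerate. -/
theorem rank_four_quadratic_forms_of_quartic_norm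
    (k K : Type) [Field k] [CharZero k] [Field K] [Algebra k K]
    (hdeg : Module.finrank k K = 4)
    (a : k) (ha : ¬∃ x : k, x ^ 2 = a)
    (α : K) (hα : α ^ 2 = algebraMap k K a)
    (β : K) (hβ : IntermediateField.adjoin (↥k⟮α⟯) {β} = ⊤)
    (ρ : ↥k⟮α⟯) (hρ : ρ ≠ 0)
    (f₀ f₁ : (Fin 4 → k) → k)
    (hf : ∀ y : Fin 4 → k,
      ((ρ * Algebra.norm (↥k⟮α⟯)
          ((algebraMap k K (y 0) + algebraMap k K (y 1) * α) +
            (algebraMap k K (y 2) + algebraMap k K (y 3) * α) * β) : ↥k⟮α⟯) : K)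
        = algebraMap k K (f₀ y) + algebraMap k K (f₁ y) * α) :
    ∃ Q₀ Q₁ : QuadraticForm k (Fin 4 → k),
      ⇑Q₀ = f₀ ∧ ⇑Q₁ = f₁ ∧
      Q₀.polarBilin.Nondegenerate ∧ Q₁.polarBilin.Nondegenerate := by
  have hLrank : Module.finrank k k⟮α⟯ = 2 := by
    have hirr : Irreducible (Polynomial.X ^ 2 - Polynomial.C a) := by
      rw [Polynomial.irreducible_iff_roots_eq_zero_of_degree_le_three
        (by rw [Polynomial.natDegree_X_pow_sub_C]) (by rw [Polynomial.natDegree_X_pow_sub_C]; norm_num)]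
      rw [Multiset.eq_zero_iff_forall_notMem]
      intro x hx
      have := Polynomial.isRoot_of_mem_roots hx
      simp only [Polynomial.IsRoot, Polynomial.eval_sub, Polynomial.eval_pow, Polynomial.eval_X,
        Polynomial.eval_C] at this
      exact ha ⟨x, sub_eq_zero.1 this⟩
    have hmon : (Polynomial.X ^ 2 - Polynomial.C a).Monic :=
      Polynomial.monic_X_pow_sub_C a two_ne_zero
    have hroot : Polynomial.aeval α (Polynomial.X ^ 2 - Polynomial.C a) = 0 := by
      simp [hα]
    rw [IntermediateField.adjoin.finrank ⟨_, hmon, by simpa [Polynomial.aeval_def] using hroot⟩,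
      ← minpoly.eq_of_irreducible_of_monic hirr hroot hmon, Polynomial.natDegree_X_pow_sub_C]
  have hKrank : Module.finrank k⟮α⟯ K = 2 := by
    have := Module.finrank_mul_finrank k k⟮α⟯ K
    rw [hLrank, hdeg] at this
    omega
  let α' : k⟮α⟯ := ⟨α, IntermediateField.mem_adjoin_simple_self k α⟩
  have hα' : α' ∉ (algebraMap k k⟮α⟯).range := by
    rintro ⟨x, hx⟩
    have hx2 : algebraMap k K x = α := congrArg Subtype.val hx
    apply ha
    refine ⟨x, (algebraMap k K).injective ?_⟩
    rw [map_pow, hx2, hα]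
  have hβ' : β ∉ (algebraMap k⟮α⟯ K).range := by
    rintro ⟨x, hx⟩
    have hbot : IntermediateField.adjoin (↥k⟮α⟯) {β} = ⊥ := by
      rw [IntermediateField.adjoin_simple_eq_bot_iff, IntermediateField.mem_bot]
      exact ⟨x, hx⟩
    rw [hβ] at hbot
    have := IntermediateField.finrank_top' (F := k⟮α⟯) (E := K)
    rw [hbot, IntermediateField.finrank_bot, hKrank] at this
    omega
  obtain ⟨b, hb0, hb1⟩ := aux_basis hLrank α' hα'
  obtain ⟨t, n, hd, hN⟩ := aux_norm hKrank β hβ'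
  let u : (Fin 4 → k) →ₗ[k] k⟮α⟯ :=
    (LinearMap.proj 0).smulRight (b 0) + (LinearMap.proj 1).smulRight (b 1)
  let v : (Fin 4 → k) →ₗ[k] k⟮α⟯ :=
    (LinearMap.proj 2).smulRight (b 0) + (LinearMap.proj 3).smulRight (b 1)
  have hu : ∀ y, u y = y 0 • b 0 + y 1 • b 1 := fun y => rfl
  have hv : ∀ y, v y = y 2 • b 0 + y 3 • b 1 := fun y => rfl
  have hsurj : ∀ z w, ∃ y, u y = z ∧ v y = w := by
    intro z w
    refine ⟨![b.repr z 0, b.repr z 1, b.repr w 0, b.repr w 1], ?_, ?_⟩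
    · rw [hu]
      conv_rhs => rw [← b.sum_repr z, Fin.sum_univ_two]
      rfl
    · rw [hv]
      conv_rhs => rw [← b.sum_repr w, Fin.sum_univ_two]
      rfl
  have hcoord : ∀ c d : k, b.coord 0 (c • b 0 + d • b 1) = c ∧
      b.coord 1 (c • b 0 + d • b 1) = d := by
    intro c d
    constructor <;> simp
  have hinj : ∀ y, u y = 0 → v y = 0 → y = 0 := by
    intro y h1 h2
    rw [hu] at h1
    rw [hv] at h2
    have c1 := hcoord (y 0) (y 1)
    have c2 := hcoord (y 2) (y 3)
    rw [h1, map_zero, map_zero] at c1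
    rw [h2, map_zero, map_zero] at c2
    ext i
    fin_cases i
    · exact c1.1.symm
    · exact c1.2.symm
    · exact c2.1.symm
    · exact c2.2.symm
  have hkey : ∀ y, ρ * (u y ^ 2 + t * (u y * v y) + n * v y ^ 2) = f₀ y • b 0 + f₁ y • b 1 := by
    intro y
    rw [← hN]
    apply Subtype.ext
    have e1 : ∀ c d : k, algebraMap k⟮α⟯ K (c • b 0 + d • b 1)
        = algebraMap k K c + algebraMap k K d * α := by
      intro c d
      rw [hb0, hb1, Algebra.smul_def, Algebra.smul_def, mul_one]
      rfl
    have e2 := e1 (f₀ y) (f₁ y)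
    rw [hu, hv, e1, e1]
    exact (hf y).trans e2.symm
  have hs : ∀ i, b.coord i ≠ 0 := by
    intro i h
    have : b.coord i (b i) = 0 := by rw [h]; rfl
    simp at this
  obtain ⟨Q₀, h0, n0⟩ := aux_transfer u v hsurj hinj t n ρ hd hρ (b.coord 0) (hs 0)
  obtain ⟨Q₁, h1, n1⟩ := aux_transfer u v hsurj hinj t n ρ hd hρ (b.coord 1) (hs 1)
  refine ⟨Q₀, Q₁, ?_, ?_, n0, n1⟩
  · funext y
    rw [h0, hkey, (hcoord _ _).1]
  · funext y
    rw [h1, hkey, (hcoord _ _).2]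
end

section
/- Let F be a field, let c ∈ F be nonzero, let r ≥ 1 and n ≥ 1 be integers, and let η₁, …, η_r ∈ F. Then the polynomial c·∏_{i=1}^r (t − η_i) − u₁⋯u_n is irreducible in the polynomial ring F[t, u₁, …, u_n]. (Geometric integrality of the variety X defined by P(t) = N_{K/k}(z), used in the proof of Proposition 3.2.) -/
open MvPolynomial

/-- Geometric integrality of the variety `X` defined by `P(t) = N_{K/k}(z)`, used in
the proof of Proposition 3.2 (Derenthal–Smeets–Wei): over any field `F`, the polynomial
`c·∏ᵢ(t − ηᵢ) − u₁⋯uₙ` is irreducible in `F[t, u₁, …, uₙ]`. -/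
theorem irreducible_norm_form_equation
    (F : Type) [Field F] (c : F) (hc : c ≠ 0)
    (r n : ℕ) (hr : 1 ≤ r) (hn : 1 ≤ n) (η : Fin r → F) :
    Irreducible
      (C c * ∏ i : Fin r, (X 0 - C (η i)) - ∏ j : Fin n, X j.succ :
        MvPolynomial (Fin (n + 1)) F) := by
  classical
  obtain ⟨m, rfl⟩ : ∃ m, n = m + 1 := ⟨n - 1, by omega⟩
  have key : (C c * ∏ i : Fin r, (X 0 - C (η i)) - ∏ j : Fin (m + 1), X j.succ :
        MvPolynomial (Fin (m + 1 + 1)) F) =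
      (-∏ j : Fin m, X j.castSucc.succ) * X (Fin.last m).succ
        + C c * ∏ i : Fin r, (X 0 - C (η i)) := by
    rw [Fin.prod_univ_castSucc]; ring
  have hX : ∀ j k : Fin (m + 1 + 1), j ≠ k →
      j ∉ (X k : MvPolynomial (Fin (m + 1 + 1)) F).vars := by
    intro j k h; simpa [vars_X] using h
  rw [key]
  apply irreducible_mul_X_add
  · exact neg_ne_zero.mpr (Finset.prod_ne_zero_iff.mpr fun j _ => X_ne_zero _)
  · rw [vars_neg]
    intro h
    obtain ⟨j, -, hj⟩ := Finset.mem_biUnion.mp (vars_prod _ h)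
    refine hX _ _ ?_ hj
    intro h
    exact (Fin.castSucc_lt_last j).ne (Fin.succ_injective _ h).symm
  · rw [vars_C_mul _ hc]
    intro h
    obtain ⟨j, -, hj⟩ := Finset.mem_biUnion.mp (vars_prod _ h)
    have := vars_sub_subset _ hj
    simp [vars_X, vars_C] at this
  · refine IsRelPrime.neg_left ?_
    refine IsRelPrime.prod_left fun j _ => ?_
    have hp : Prime (X j.castSucc.succ : MvPolynomial (Fin (m + 1 + 1)) F) := X_prime
    rw [hp.irreducible.isRelPrime_iff_not_dvd]
    intro h
    rcases hp.dvd_or_dvd h with h | h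
    · have := map_dvd (aeval (fun _ => (0 : F))) h
      simp [hc] at this
    · obtain ⟨i, -, hi⟩ := hp.exists_mem_finset_dvd h
      have := map_dvd (aeval (fun k : Fin (m + 1 + 1) => if k = 0 then η i + 1 else (0 : F))) hi
      simp [Fin.succ_ne_zero] at this
end

section
/- Let F be an algebraically closed field of characteristic 0, let c ∈ F be nonzero, let r ≥ 1 and n ≥ 1 be integers, and let η₁, …, η_r ∈ F be pairwise distinct. Let R = F[t, u₁, …, u_n] / (c·∏_{i=1}^r (t − η_i) − u₁⋯u_n). Then every unit of the ring R is the image of a nonzero constant: the canonical map F^× → R^× is surjective (and R^× ≅ F^×). (The claim k̄[X]^× = k̄^× in the proof of Proposition 3.2.) -/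
open MvPolynomial

namespace UnitsAux

variable {F : Type} [Field F]

/-- The polynomial in `t` as a multivariate polynomial. -/
noncomputable def P (c : F) {r : ℕ} (η : Fin r → F) (m : ℕ) : MvPolynomial (Fin (m + 2)) F :=
  C c * ∏ i : Fin r, (X 0 - C (η i))

/-- The product of all the `u` variables but the first. -/
noncomputable def U (F : Type) [Field F] (m : ℕ) : MvPolynomial (Fin (m + 2)) F :=
  ∏ j : Fin m, X j.succ.succ

/-- The defining equation. -/
noncomputable def f (c : F) {r : ℕ} (η : Fin r → F) (m : ℕ) : MvPolynomial (Fin (m + 2)) F :=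
  P c η m - X 1 * U F m

/-- Inclusion of the polynomials without `u₁`. -/
noncomputable def iota (F : Type) [Field F] (m : ℕ) :
    MvPolynomial (Fin (m + 1)) F →ₐ[F] MvPolynomial (Fin (m + 2)) F :=
  aeval (Fin.cons (X 0) (fun j => X j.succ.succ))

lemma iota_zero (m : ℕ) : iota F m (X 0) = X 0 := by simp [iota]

lemma iota_succ (m : ℕ) (j : Fin m) : iota F m (X j.succ) = X j.succ.succ := by simp [iota]

lemma iota_U (m : ℕ) : iota F m (∏ j : Fin m, X j.succ) = U F m := by
  simp [iota_succ, U]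

lemma iota_P (c : F) {r : ℕ} (η : Fin r → F) (m : ℕ) :
    iota F m (C c * ∏ i : Fin r, (X 0 - C (η i))) = P c η m := by
  have h (a : F) : iota F m (C a) = C a := (iota F m).commutes a
  simp [P, iota_zero, h]

lemma elim (c : F) {r : ℕ} (η : Fin r → F) (m : ℕ) (g : MvPolynomial (Fin (m + 2)) F) :
    ∃ (k : ℕ) (G : MvPolynomial (Fin (m + 1)) F), f c η m ∣ U F m ^ k * g - iota F m G := by
  induction g using MvPolynomial.induction_on with
  | C a => exact ⟨0, C a, by simp [show iota F m (C a) = C a from (iota F m).commutes a]⟩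
  | add p q hp hq =>
    obtain ⟨k, G, a, ha⟩ := hp
    obtain ⟨l, H, b, hb⟩ := hq
    refine ⟨k + l, (∏ j : Fin m, X j.succ) ^ l * G + (∏ j : Fin m, X j.succ) ^ k * H,
      U F m ^ l * a + U F m ^ k * b, ?_⟩
    rw [map_add, map_mul, map_mul, map_pow, map_pow, iota_U]
    linear_combination U F m ^ l * ha + U F m ^ k * hb
  | mul_X p i hp =>
    obtain ⟨k, G, a, ha⟩ := hp
    induction i using Fin.cases with
    | zero =>
      refine ⟨k, G * X 0, a * X 0, ?_⟩
      rw [map_mul, iota_zero]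
      linear_combination X 0 * ha
    | succ i =>
      induction i using Fin.cases with
      | zero =>
        refine ⟨k + 1, G * (C c * ∏ i : Fin r, (X 0 - C (η i))),
          P c η m * a - U F m ^ k * p, ?_⟩
        rw [map_mul, iota_P]
        have h1 : (Fin.succ 0 : Fin (m + 2)) = 1 := rfl
        rw [h1]
        have hf : f c η m = P c η m - X 1 * U F m := rfl
        linear_combination P c η m * ha + U F m ^ k * p * hf
      | succ j =>
        refine ⟨k, G * X j.succ, a * X j.succ.succ, ?_⟩
        rw [map_mul, iota_succ]
        linear_combination X j.succ.succ * ha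

lemma X_not_dvd (c : F) (hc : c ≠ 0) {r : ℕ} (η : Fin r → F) (m : ℕ) (j : Fin m) :
    ¬ (X j.succ.succ : MvPolynomial (Fin (m + 2)) F) ∣ f c η m := by
  intro h
  have h2 := map_dvd (aeval (R := F) (Fin.cons Polynomial.X (fun _ => 0) :
    Fin (m + 2) → Polynomial F)) h
  have hU : (aeval (R := F) (Fin.cons Polynomial.X (fun _ => 0) :
    Fin (m + 2) → Polynomial F)) (X 1) = 0 := by
    rw [aeval_X]; rfl
  rw [aeval_X, Fin.cons_succ, zero_dvd_iff, f, map_sub, map_mul _ (X 1), hU, zero_mul, sub_zero,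
    P] at h2
  simp only [map_mul, map_prod, map_sub, aeval_X, Fin.cons_zero, algHom_C, mul_eq_zero,
    Finset.prod_eq_zero_iff, Polynomial.algebraMap_eq] at h2
  rcases h2 with h2 | ⟨i, -, h2⟩
  · exact hc (by simpa using h2)
  · exact Polynomial.X_sub_C_ne_zero _ h2

lemma cancel_X (c : F) (hc : c ≠ 0) {r : ℕ} (η : Fin r → F) (m : ℕ) (j : Fin m)
    (g : MvPolynomial (Fin (m + 2)) F) (h : f c η m ∣ X j.succ.succ * g) : f c η m ∣ g := by
  obtain ⟨q, hq⟩ := h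
  have hp : Prime (X j.succ.succ : MvPolynomial (Fin (m + 2)) F) := MvPolynomial.X_prime
  rcases hp.dvd_or_dvd (Dvd.intro _ hq) with h | ⟨q', rfl⟩
  · exact absurd h (X_not_dvd c hc η m j)
  · refine ⟨q', mul_left_cancel₀ hp.ne_zero ?_⟩
    rw [hq]; ring

lemma cancel_U (c : F) (hc : c ≠ 0) {r : ℕ} (η : Fin r → F) (m : ℕ)
    (g : MvPolynomial (Fin (m + 2)) F) (h : f c η m ∣ U F m * g) : f c η m ∣ g := by
  have key : ∀ s : Finset (Fin m), f c η m ∣ (∏ j ∈ s, X j.succ.succ) * g → f c η m ∣ g := by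
    intro s
    induction s using Finset.induction_on with
    | empty => simp
    | insert a s ha ih =>
      intro h
      rw [Finset.prod_insert ha, mul_assoc] at h
      exact ih (cancel_X c hc η m a _ h)
  exact key _ h

lemma cancel_U_pow (c : F) (hc : c ≠ 0) {r : ℕ} (η : Fin r → F) (m k : ℕ)
    (g : MvPolynomial (Fin (m + 2)) F) (h : f c η m ∣ U F m ^ k * g) : f c η m ∣ g := by
  induction k with
  | zero => simpa using h
  | succ k ih =>
    rw [pow_succ', mul_assoc] at h
    exact ih (cancel_U c hc η m _ h)

/-- The function field in `u₂, …`. -/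
abbrev K (F : Type) [Field F] (m : ℕ) : Type := FractionRing (MvPolynomial (Fin m) F)

/-- The embedding solving for `u₁`. -/
noncomputable def phi (c : F) {r : ℕ} (η : Fin r → F) (m : ℕ) :
    MvPolynomial (Fin (m + 2)) F →ₐ[F] Polynomial (K F m) :=
  aeval (Fin.cons Polynomial.X (Fin.cons
    (algebraMap F _ c * (∏ i : Fin r, (Polynomial.X - algebraMap F _ (η i))) *
      Polynomial.C (∏ j : Fin m, algebraMap (MvPolynomial (Fin m) F) (K F m) (X j))⁻¹)
    (fun j => Polynomial.C (algebraMap (MvPolynomial (Fin m) F) (K F m) (X j)))))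

lemma phi_zero (c : F) {r : ℕ} (η : Fin r → F) (m : ℕ) :
    phi c η m (X 0) = Polynomial.X := by simp [phi]

lemma phi_one (c : F) {r : ℕ} (η : Fin r → F) (m : ℕ) :
    phi c η m (X 1) = algebraMap F _ c * (∏ i : Fin r, (Polynomial.X - algebraMap F _ (η i))) *
      Polynomial.C (∏ j : Fin m, algebraMap (MvPolynomial (Fin m) F) (K F m) (X j))⁻¹ := by
  rw [phi, aeval_X]; rfl

lemma phi_succ (c : F) {r : ℕ} (η : Fin r → F) (m : ℕ) (j : Fin m) :
    phi c η m (X j.succ.succ) =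
      Polynomial.C (algebraMap (MvPolynomial (Fin m) F) (K F m) (X j)) := by simp [phi]

lemma phi_C (c : F) {r : ℕ} (η : Fin r → F) (m : ℕ) (a : F) :
    phi c η m (C a) = algebraMap F _ a := (phi c η m).commutes a

lemma phi_f (c : F) {r : ℕ} (η : Fin r → F) (m : ℕ) : phi c η m (f c η m) = 0 := by
  have hne : (∏ j : Fin m, algebraMap (MvPolynomial (Fin m) F) (K F m) (X j)) ≠ 0 := by
    rw [Finset.prod_ne_zero_iff]
    intro j _ h
    rw [FaithfulSMul.algebraMap_eq_zero_iff] at h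
    exact X_ne_zero j h
  have hU : phi c η m (U F m) =
      Polynomial.C (∏ j : Fin m, algebraMap (MvPolynomial (Fin m) F) (K F m) (X j)) := by
    rw [U, map_prod, map_prod]
    exact Finset.prod_congr rfl fun j _ => phi_succ c η m j
  rw [f, map_sub, map_mul, phi_one, hU, mul_assoc, ← Polynomial.C_mul, inv_mul_cancel₀ hne, P]
  simp only [map_mul, map_prod, map_sub, phi_zero, phi_C, map_one, mul_one, sub_self]

lemma phi_iota (c : F) {r : ℕ} (η : Fin r → F) (m : ℕ) (G : MvPolynomial (Fin (m + 1)) F) :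
    phi c η m (iota F m G) =
      Polynomial.map (algebraMap (MvPolynomial (Fin m) F) (K F m)) (finSuccEquiv F m G) := by
  induction G using MvPolynomial.induction_on with
  | C a =>
    rw [show iota F m (C a) = C a from (iota F m).commutes a, phi_C, finSuccEquiv_apply]
    simp [IsScalarTower.algebraMap_apply F (K F m) (Polynomial (K F m)),
      IsScalarTower.algebraMap_apply F (MvPolynomial (Fin m) F) (K F m), algebraMap_eq]
  | add p q hp hq => simp only [map_add, hp, hq, Polynomial.map_add]
  | mul_X p i hp =>
    simp only [map_mul, hp, Polynomial.map_mul]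
    congr 1
    induction i using Fin.cases with
    | zero => rw [iota_zero, phi_zero, finSuccEquiv_X_zero, Polynomial.map_X]
    | succ j => rw [iota_succ, phi_succ, finSuccEquiv_X_succ, Polynomial.map_C]

lemma ker_phi (c : F) (hc : c ≠ 0) {r : ℕ} (η : Fin r → F) (m : ℕ)
    (g : MvPolynomial (Fin (m + 2)) F) (hg : phi c η m g = 0) : f c η m ∣ g := by
  obtain ⟨k, G, h⟩ := elim c η m g
  have h0 : phi c η m (iota F m G) = 0 := by
    obtain ⟨q, hq⟩ := h
    have := congrArg (phi c η m) hq
    rw [map_sub, map_mul, map_mul, hg, phi_f, mul_zero, zero_mul, zero_sub, neg_eq_zero] at this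
    exact this
  rw [phi_iota, Polynomial.map_eq_zero_iff (IsFractionRing.injective _ _),
    EmbeddingLike.map_eq_zero_iff] at h0
  rw [h0, map_zero, sub_zero] at h
  exact cancel_U_pow c hc η m k g h

/-- Restriction to `t = e`, `u₁ = 0`. -/
noncomputable def psi (e : F) (m : ℕ) :
    MvPolynomial (Fin (m + 2)) F →ₐ[F] MvPolynomial (Fin m) F :=
  aeval (Fin.cons (C e) (Fin.cons 0 X))

lemma psi_zero (e : F) (m : ℕ) : psi e m (X 0) = C e := by simp [psi]

lemma psi_one (e : F) (m : ℕ) : psi e m (X 1) = 0 := by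
  rw [psi, aeval_X]; rfl

lemma psi_succ (e : F) (m : ℕ) (j : Fin m) : psi e m (X j.succ.succ) = X j := by simp [psi]

lemma psi_C (e : F) (m : ℕ) (a : F) : psi e m (C a) = C a := (psi e m).commutes a

lemma psi_f (c : F) {r : ℕ} (η : Fin r → F) (m : ℕ) (i : Fin r) :
    psi (η i) m (f c η m) = 0 := by
  rw [f, map_sub, map_mul, psi_one, P, map_mul, map_prod,
    Finset.prod_eq_zero (Finset.mem_univ i)]
  · simp
  · simp [psi_zero, psi_C]

lemma eval_phi (c : F) {r : ℕ} (η : Fin r → F) (m : ℕ) (i : Fin r)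
    (g : MvPolynomial (Fin (m + 2)) F) :
    (phi c η m g).eval (algebraMap F (K F m) (η i)) =
      algebraMap (MvPolynomial (Fin m) F) (K F m) (psi (η i) m g) := by
  induction g using MvPolynomial.induction_on with
  | C a =>
    rw [phi_C, psi_C, IsScalarTower.algebraMap_apply F (K F m) (Polynomial (K F m)),
      Polynomial.algebraMap_eq, Polynomial.eval_C,
      IsScalarTower.algebraMap_apply F (MvPolynomial (Fin m) F) (K F m), algebraMap_eq]
  | add p q hp hq => simp only [map_add, hp, hq, Polynomial.eval_add]
  | mul_X p j hp =>
    simp only [map_mul, hp, Polynomial.eval_mul]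
    congr 1
    induction j using Fin.cases with
    | zero =>
      rw [phi_zero, psi_zero, Polynomial.eval_X,
        IsScalarTower.algebraMap_apply F (MvPolynomial (Fin m) F) (K F m), algebraMap_eq]
    | succ j =>
      induction j using Fin.cases with
      | zero =>
        rw [show (Fin.succ 0 : Fin (m + 2)) = 1 from rfl, phi_one, psi_one, map_zero,
          Polynomial.eval_mul, Polynomial.eval_mul, Polynomial.eval_prod,
          Finset.prod_eq_zero (Finset.mem_univ i), mul_zero, zero_mul]
        rw [IsScalarTower.algebraMap_apply F (K F m) (Polynomial (K F m)),
          Polynomial.algebraMap_eq]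
        simp
      | succ j => rw [phi_succ, psi_succ, Polynomial.eval_C]

lemma main (c : F) (hc : c ≠ 0) {r : ℕ} (η : Fin r → F) (m : ℕ) (i : Fin r)
    (V W : MvPolynomial (Fin (m + 2)) F) (h : f c η m ∣ V * W - 1) :
    ∃ a : F, a ≠ 0 ∧ f c η m ∣ V - C a := by
  obtain ⟨q, hq⟩ := h
  have h1 : phi c η m V * phi c η m W = 1 := by
    have := congrArg (phi c η m) hq
    rw [map_sub, map_mul, map_mul, phi_f, zero_mul, map_one] at this
    exact sub_eq_zero.mp this
  have h2 : psi (η i) m V * psi (η i) m W = 1 := by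
    have := congrArg (psi (η i) m) hq
    rw [map_sub, map_mul, map_mul, psi_f, zero_mul, map_one] at this
    exact sub_eq_zero.mp this
  obtain ⟨k, -, hk⟩ := Polynomial.isUnit_iff.mp (IsUnit.of_mul_eq_one _ h1)
  obtain ⟨a, ha, ha2⟩ := (MvPolynomial.isUnit_iff_eq_C_of_isReduced).mp
    (IsUnit.of_mul_eq_one _ h2)
  refine ⟨a, ha.ne_zero, ker_phi c hc η m _ ?_⟩
  have h3 := eval_phi c η m i V
  rw [← hk, Polynomial.eval_C, ha2, ← algebraMap_eq,
    ← IsScalarTower.algebraMap_apply] at h3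
  rw [map_sub, ← hk, h3, phi_C, IsScalarTower.algebraMap_apply F (K F m) (Polynomial (K F m)),
    Polynomial.algebraMap_eq, sub_self]

end UnitsAux

/-- The claim `k̄[X]^× = k̄^×` in the proof of Proposition 3.2 (Derenthal–Smeets–Wei):
for `F` algebraically closed of characteristic `0`, `c ≠ 0` and `η₁, …, η_r` pairwise
distinct, every unit of `R = F[t, u₁, …, uₙ]/(c·∏ᵢ(t − ηᵢ) − u₁⋯uₙ)` comes from a
nonzero constant, i.e. `F^× → R^×` is surjective. -/
theorem units_of_coordinate_ring_are_constants
    (F : Type) [Field F] [IsAlgClosed F] [CharZero F] (c : F) (hc : c ≠ 0)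
    (r n : ℕ) (hr : 1 ≤ r) (hn : 1 ≤ n) (η : Fin r → F) (hη : Function.Injective η) :
    Function.Surjective
      (Units.map (algebraMap F
        (MvPolynomial (Fin (n + 1)) F ⧸
          Ideal.span {(C c * ∏ i : Fin r, (X 0 - C (η i)) - ∏ j : Fin n, X j.succ :
            MvPolynomial (Fin (n + 1)) F)})).toMonoidHom) := by
  obtain ⟨m, rfl⟩ : ∃ m, n = m + 1 := ⟨n - 1, by omega⟩
  have hf : (C c * ∏ i : Fin r, (X 0 - C (η i)) - ∏ j : Fin (m + 1), X j.succ :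
            MvPolynomial (Fin (m + 1 + 1)) F) = UnitsAux.f c η m := by
    rw [Fin.prod_univ_succ]; rfl
  rw [hf]
  intro v
  obtain ⟨V, hV⟩ := Ideal.Quotient.mk_surjective v.val
  obtain ⟨W, hW⟩ := Ideal.Quotient.mk_surjective v⁻¹.val
  have h : UnitsAux.f c η m ∣ V * W - 1 := by
    rw [← Ideal.mem_span_singleton, ← Ideal.Quotient.eq, map_mul, hV, hW, map_one,
      Units.mul_inv]
  obtain ⟨a, ha, h2⟩ := UnitsAux.main c hc η m ⟨0, hr⟩ V W h
  refine ⟨Units.mk0 a ha, Units.ext ?_⟩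
  rw [← Ideal.mem_span_singleton, ← Ideal.Quotient.eq, hV] at h2
  rw [h2]
  rfl
end

section
/- Let F be an algebraically closed field of characteristic 0, let c ∈ F be nonzero, let r ≥ 1 and n ≥ 1 be integers, and let η₁, …, η_r ∈ F be pairwise distinct. Let R = F[t, u₁, …, u_n] / (c·∏_{i=1}^r (t − η_i) − u₁⋯u_n) and let R' be the localization of R away from the image of ∏_{i=1}^r (t − η_i) (equivalently, away from u₁⋯u_n). Then: (i) every unit of R' can be written as c'·∏_{i=1}^r (t − η_i)^{e_i} · ∏_{j=1}^n u_j^{m_j} with c' ∈ F^× and integers e_i, m_j; and (ii) the quotient group R'^× / F^× is a free abelian group of rank r + n − 1, generated by the classes of t − η₁, …, t − η_r, u₁, …, u_n subject to the single relation Σ_{i=1}^r [t − η_i] = Σ_{j=1}^n [u_j]. (Structure of k̄[U]^×/k̄^× in the proof of Proposition 3.2.) -/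
open MvPolynomial

/-- The polynomial `c·∏ᵢ(t − ηᵢ) − u₁⋯uₙ` in `F[t, u₁, …, uₙ]`. -/
noncomputable def normFormPoly (F : Type) [Field F] (c : F) (r n : ℕ) (η : Fin r → F) :
    MvPolynomial (Fin (n + 1)) F :=
  C c * ∏ i : Fin r, (X 0 - C (η i)) - ∏ j : Fin n, X j.succ

/-- The coordinate ring `R = F[t, u₁, …, uₙ]/(c·∏ᵢ(t − ηᵢ) − u₁⋯uₙ)` of `X`. -/
noncomputable abbrev coordRing (F : Type) [Field F] (c : F) (r n : ℕ) (η : Fin r → F) :=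
  MvPolynomial (Fin (n + 1)) F ⧸ Ideal.span {normFormPoly F c r n η}

/-- The coordinate ring `R' = F[U]` of `U`, the localization of `R` away from
`∏ᵢ(t − ηᵢ)`. -/
noncomputable abbrev coordRingU (F : Type) [Field F] (c : F) (r n : ℕ) (η : Fin r → F) :=
  Localization.Away
    (Ideal.Quotient.mk (Ideal.span {normFormPoly F c r n η}) (∏ i : Fin r, (X 0 - C (η i))))

/-- The canonical map `F → R'`. -/
noncomputable def constMap (F : Type) [Field F] (c : F) (r n : ℕ) (η : Fin r → F) :
    F →+* coordRingU F c r n η :=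
  (algebraMap _ _).comp (algebraMap F (coordRing F c r n η))

/-- The image of `t − ηᵢ` in `R'`. -/
noncomputable def tFactor (F : Type) [Field F] (c : F) (r n : ℕ) (η : Fin r → F)
    (i : Fin r) : coordRingU F c r n η :=
  algebraMap (coordRing F c r n η) _
    (Ideal.Quotient.mk (Ideal.span {normFormPoly F c r n η})
      (X 0 - C (η i) : MvPolynomial (Fin (n + 1)) F))

/-- The image of `uⱼ` in `R'`. -/
noncomputable def uFactor (F : Type) [Field F] (c : F) (r n : ℕ) (η : Fin r → F)
    (j : Fin n) : coordRingU F c r n η :=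
  algebraMap (coordRing F c r n η) _
    (Ideal.Quotient.mk (Ideal.span {normFormPoly F c r n η})
      (X j.succ : MvPolynomial (Fin (n + 1)) F))


/-- The primes `t - ηᵢ` and `u_j` (all but the last one) of `F[t, u₁, …, u_N]`. -/
noncomputable def primeFam (F : Type) [Field F] (r N : ℕ) (η : Fin r → F) :
    Fin r ⊕ Fin N → MvPolynomial (Fin (N + 1)) F :=
  Sum.elim (fun i => X 0 - C (η i)) (fun j => X j.succ)

lemma primeFam_prime (F : Type) [Field F] (r N : ℕ) (η : Fin r → F) (x : Fin r ⊕ Fin N) :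
    Prime (primeFam F r N η x) := by
  rcases x with i | j
  · rw [← MulEquiv.prime_iff (finSuccEquiv F N)]
    have : (finSuccEquiv F N) (primeFam F r N η (Sum.inl i))
        = Polynomial.X - Polynomial.C (C (η i)) := by
      simp [primeFam, finSuccEquiv_apply]
    rw [this]
    exact Polynomial.prime_X_sub_C _
  · exact X_prime

lemma primeFam_not_dvd (F : Type) [Field F] [CharZero F] (r N : ℕ) (η : Fin r → F)
    (hη : Function.Injective η) (x y : Fin r ⊕ Fin N) (hxy : x ≠ y) :
    ¬ primeFam F r N η x ∣ primeFam F r N η y := by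
  suffices h : ∃ v : Fin (N + 1) → F, eval v (primeFam F r N η x) = 0 ∧
      eval v (primeFam F r N η y) ≠ 0 by
    obtain ⟨v, h0, h1⟩ := h
    rintro ⟨q, hq⟩
    rw [hq, map_mul, h0, zero_mul] at h1
    exact h1 rfl
  rcases x with i | j
  · refine ⟨Fin.cons (η i) (fun _ => 1), ?_, ?_⟩
    · simp [primeFam]
    · rcases y with i' | j'
      · simp only [primeFam, Sum.elim_inl, map_sub, eval_X, eval_C, Fin.cons_zero]
        intro h
        exact hxy (by rw [hη (sub_eq_zero.mp h)])
      · simp [primeFam]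
  · classical
    obtain ⟨τ, hτ⟩ := Infinite.exists_notMem_finset (Finset.univ.image η)
    refine ⟨Fin.cons τ (fun k => if k = j then 0 else 1), ?_, ?_⟩
    · simp [primeFam]
    · rcases y with i' | j'
      · simp only [primeFam, Sum.elim_inl, map_sub, eval_X, eval_C, Fin.cons_zero]
        intro h
        exact hτ (by simp [sub_eq_zero.mp h])
      · have : j' ≠ j := fun h => hxy (by rw [h])
        simp [primeFam, this]

lemma exps_nonpos {A K ι : Type} [CommRing A] [IsDomain A] [Field K] [Algebra A K]
    [IsFractionRing A K] [Fintype ι] (f : ι → A) (hf : ∀ i, Prime (f i))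
    (hd : ∀ i j, i ≠ j → ¬ f i ∣ f j) (u : A) (z : ι → ℤ)
    (h : algebraMap A K u * ∏ i, algebraMap A K (f i) ^ z i = 1) (i : ι) : z i ≤ 0 := by
  by_contra hi
  push Not at hi
  have hne : ∀ i, algebraMap A K (f i) ≠ 0 := fun i => by
    simpa using (hf i).ne_zero
  have key : u * ∏ i, f i ^ (z i).toNat = ∏ i, f i ^ (-z i).toNat := by
    apply IsFractionRing.injective A K
    simp only [map_mul, map_prod, map_pow]
    have e : ∀ i, algebraMap A K (f i) ^ (z i).toNat =
        algebraMap A K (f i) ^ z i * algebraMap A K (f i) ^ (-z i).toNat := by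
      intro i
      rw [← zpow_natCast, ← zpow_natCast, ← zpow_add₀ (hne i)]
      congr 1
      omega
    rw [Finset.prod_congr rfl (fun i _ => e i), Finset.prod_mul_distrib, ← mul_assoc, h, one_mul]
  have h1 : f i ∣ ∏ i, f i ^ (-z i).toNat := by
    rw [← key]
    apply Dvd.dvd.mul_left
    refine (dvd_pow_self (f i) (by omega)).trans (Finset.dvd_prod_of_mem _ (Finset.mem_univ i))
  obtain ⟨j, -, hj⟩ := ((hf i).dvd_finsetProd_iff _).mp h1
  by_cases hij : i = j
  · subst hij
    rw [show (-z i).toNat = 0 by omega, pow_zero] at hj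
    exact (hf i).not_isUnit (isUnit_of_dvd_one hj)
  · exact hd i j hij ((hf i).dvd_of_dvd_pow hj)

lemma exps_zero {A K ι : Type} [CommRing A] [IsDomain A] [Field K] [Algebra A K]
    [IsFractionRing A K] [Fintype ι] (f : ι → A) (hf : ∀ i, Prime (f i))
    (hd : ∀ i j, i ≠ j → ¬ f i ∣ f j) (u : Aˣ) (z : ι → ℤ)
    (h : algebraMap A K u * ∏ i, algebraMap A K (f i) ^ z i = 1) (i : ι) : z i = 0 := by
  apply le_antisymm (exps_nonpos f hf hd u z h i)
  have := exps_nonpos (K := K) f hf hd (u⁻¹ : Aˣ) (fun i => - z i) ?_ i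
  · simpa using this
  · have h2 := congrArg (fun x => x⁻¹) h
    have h3 : algebraMap A K ((u⁻¹ : Aˣ) : A) = (algebraMap A K u)⁻¹ := by
      apply eq_inv_of_mul_eq_one_left
      rw [← map_mul]; simp
    simpa [h3, zpow_neg, mul_comm] using h2

lemma exists_formSubgroup {B G : Type} [CommGroup B] [CommGroup G] {r n : ℕ} (q : B →* G)
    (x : Fin r → G) (y : Fin n → G) :
    ∃ H : Subgroup G, (∀ w ∈ H, ∃ (c' : B) (e : Fin r → ℤ) (m : Fin n → ℤ),
      w = q c' * (∏ i, x i ^ e i) * ∏ j, y j ^ m j) ∧ (∀ b, q b ∈ H) ∧ (∀ i, x i ∈ H) ∧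
      ∀ j, y j ∈ H := by
  refine ⟨{ carrier := {w | ∃ (c' : B) (e : Fin r → ℤ) (m : Fin n → ℤ),
                w = q c' * (∏ i, x i ^ e i) * ∏ j, y j ^ m j}
            one_mem' := ⟨1, 0, 0, by simp⟩
            mul_mem' := ?_
            inv_mem' := ?_ }, fun w hw => hw, fun a => ⟨a, 0, 0, by simp⟩, fun i => ?_, fun j => ?_⟩
  · rintro _ _ ⟨c1, e1, m1, rfl⟩ ⟨c2, e2, m2, rfl⟩
    refine ⟨c1 * c2, e1 + e2, m1 + m2, ?_⟩
    simp only [map_mul, Pi.add_apply, zpow_add, Finset.prod_mul_distrib]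
    simp only [mul_assoc, mul_left_comm, mul_comm]
  · rintro _ ⟨c1, e1, m1, rfl⟩
    refine ⟨c1⁻¹, -e1, -m1, ?_⟩
    simp only [map_inv, Pi.neg_apply, zpow_neg, Finset.prod_inv_distrib, mul_inv]
  · refine ⟨1, Pi.single i 1, 0, ?_⟩
    rw [Finset.prod_eq_single i] <;> simp +contextual [Pi.single_apply]
  · refine ⟨1, 0, Pi.single j 1, ?_⟩
    rw [Finset.prod_eq_single (s := (Finset.univ : Finset (Fin n))) j] <;>
      simp +contextual [Pi.single_apply]

set_option maxHeartbeats 2000000 in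
lemma units_core
    (F : Type) [Field F] [CharZero F] (c : F) (hc : c ≠ 0)
    (r N : ℕ) (η : Fin r → F) (hη : Function.Injective η)
    (S : Type) [CommRing S] (π : MvPolynomial (Fin (N + 1 + 1)) F →+* S)
    (hrel : π (normFormPoly F c r (N + 1) η) = 0)
    (hP : IsUnit (π (∏ i : Fin r, (X 0 - C (η i)))))
    (hsurj : ∀ w : S, ∃ (k : ℕ) (x : MvPolynomial (Fin (N + 1 + 1)) F),
      w * π (∏ i : Fin r, (X 0 - C (η i))) ^ k = π x)
    (hlift : ∀ θ : MvPolynomial (Fin (N + 1 + 1)) F →+*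
        FractionRing (MvPolynomial (Fin (N + 1)) F),
      θ (normFormPoly F c r (N + 1) η) = 0 → θ (∏ i : Fin r, (X 0 - C (η i))) ≠ 0 →
      ∃ φ : S →+* FractionRing (MvPolynomial (Fin (N + 1)) F), ∀ p, φ (π p) = θ p) :
    ∃ (hT : ∀ i : Fin r, IsUnit (π (X 0 - C (η i))))
      (hU : ∀ j : Fin (N + 1), IsUnit (π (X j.succ))),
      (∀ w : Sˣ,
        ∃ (c' : Fˣ) (e : Fin r → ℤ) (m : Fin (N + 1) → ℤ),
          w = Units.map (π.comp C).toMonoidHom c' *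
            (∏ i, (hT i).unit ^ e i) * ∏ j, (hU j).unit ^ m j) ∧
      (∀ (c' : Fˣ) (e : Fin r → ℤ) (m : Fin (N + 1) → ℤ),
        Units.map (π.comp C).toMonoidHom c' *
            (∏ i, (hT i).unit ^ e i) * ∏ j, (hU j).unit ^ m j = 1 →
          ∃ s : ℤ, (∀ i, e i = s) ∧ ∀ j, m j = -s) := by
  classical
  have hrel' : π (C c) * π (∏ i : Fin r, (X 0 - C (η i))) = π (∏ j : Fin (N + 1), X j.succ) := by
    rw [← map_mul]
    rw [normFormPoly, map_sub] at hrel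
    exact sub_eq_zero.mp hrel
  have hT : ∀ i : Fin r, IsUnit (π (X 0 - C (η i))) := by
    rw [map_prod] at hP
    intro i
    exact isUnit_of_dvd_unit (Finset.dvd_prod_of_mem
      (fun i : Fin r => π (X 0 - C (η i))) (Finset.mem_univ i)) hP
  have hcu : ∀ a : F, a ≠ 0 → IsUnit (π (C a)) := fun a ha =>
    ((IsUnit.mk0 a ha).map C).map π
  have hU : ∀ j : Fin (N + 1), IsUnit (π (X j.succ)) := by
    have h1 := (hcu c hc).mul hP
    rw [hrel', map_prod] at h1
    intro j
    exact isUnit_of_dvd_unit (Finset.dvd_prod_of_mem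
      (fun j : Fin (N + 1) => π (X j.succ)) (Finset.mem_univ j)) h1
  refine ⟨hT, hU, ?_, ?_⟩
  all_goals
    let A := MvPolynomial (Fin (N + 1)) F
    let K := FractionRing A
    let f : Fin r ⊕ Fin N → A := primeFam F r N η
    have hf : ∀ i, Prime (f i) := primeFam_prime F r N η
    have hd : ∀ i j, i ≠ j → ¬ f i ∣ f j := primeFam_not_dvd F r N η hη
    let P : A := ∏ i : Fin r, (X 0 - C (η i))
    let Q : A := ∏ j : Fin N, X j.succ
    have hPQ : ∏ x, f x = P * Q := by
      simp [f, P, Q, primeFam, Fintype.prod_sum_type]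
    have hPQ0 : P * Q ≠ 0 := by
      rw [← hPQ]
      exact Finset.prod_ne_zero_iff.mpr fun i _ => (hf i).ne_zero
    have hP0 : P ≠ 0 := left_ne_zero_of_mul hPQ0
    have hQ0 : Q ≠ 0 := right_ne_zero_of_mul hPQ0
    let al : K := algebraMap A K (C c * P) / algebraMap A K Q
    let v : Fin (N + 1 + 1) → K := Fin.snoc (fun k : Fin (N + 1) => algebraMap A K (X k)) al
    let θ : MvPolynomial (Fin (N + 1 + 1)) F →+* K := eval₂Hom ((algebraMap A K).comp C) v
    have hθC : ∀ a, θ (C a) = algebraMap A K (C a) := fun a => by simp [θ]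
    have hθX : ∀ k : Fin (N + 1), θ (X k.castSucc) = algebraMap A K (X k) := fun k => by
      simp only [θ, coe_eval₂Hom, eval₂_X, v, Fin.snoc_castSucc]
    have hθ0 : θ (X 0) = algebraMap A K (X 0) := hθX 0
    have hθj : ∀ j : Fin N, θ (X j.castSucc.succ) = algebraMap A K (X j.succ) :=
      fun j => hθX j.succ
    have hθl : θ (X (Fin.last N).succ) = al := by
      rw [Fin.succ_last]
      simp only [θ, coe_eval₂Hom, eval₂_X, v, Fin.snoc_last]
    have hθP : θ (∏ i : Fin r, (X 0 - C (η i))) = algebraMap A K P := by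
      simp only [P, map_prod, map_sub, hθ0, hθC]
    have hQK : algebraMap A K Q ≠ 0 := by simpa using hQ0
    have hPK : algebraMap A K P ≠ 0 := by simpa using hP0
    obtain ⟨φ, hφ⟩ := hlift θ (by
      rw [normFormPoly, map_sub, map_mul, hθP, hθC, map_prod θ, Fin.prod_univ_castSucc, hθl]
      have : ∏ j : Fin N, θ (X j.castSucc.succ) = algebraMap A K Q := by
        simp only [Q, map_prod, hθj]
      rw [this, mul_div_cancel₀ _ hQK, map_mul, sub_self]) (by rw [hθP]; exact hPK)
  · let ψ : A →+* S := π.comp (rename (R := F) (Fin.castSucc : Fin (N + 1) → _)).toRingHom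
    have hψC : ∀ a, ψ (C a) = π (C a) := fun a =>
      congrArg π (rename_C _ a)
    have hψX : ∀ k, ψ (X k) = π (X k.castSucc) := fun k =>
      congrArg π (rename_X _ k)
    have hψ0 : ψ (X 0) = π (X 0) := hψX 0
    have hψj : ∀ j : Fin N, ψ (X j.succ) = π (X j.castSucc.succ) := fun j => hψX j.succ
    have hψinj : Function.Injective ψ := by
      have : φ.comp ψ = algebraMap A K := by
        apply MvPolynomial.ringHom_ext
        · intro a
          rw [RingHom.comp_apply, hψC, hφ, hθC]
        · intro k
          rw [RingHom.comp_apply, hψX, hφ, hθX]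
      have h2 : Function.Injective (φ.comp ψ) := by
        rw [this]; exact IsFractionRing.injective A K
      exact Function.Injective.of_comp (f := φ) h2
    have hψP : ψ P = π (∏ i : Fin r, (X 0 - C (η i))) := by
      simp only [P, map_prod, map_sub, hψ0, hψC]
    have hlast : π (X (Fin.last N).succ) * ψ Q = ψ (C c * P) := by
      rw [map_mul, hψC, hψP, hrel', map_prod π, Fin.prod_univ_castSucc, mul_comm]
      simp only [Q, map_prod ψ, hψj]
    have hpoly : ∀ p, ∃ (k : ℕ) (a : A), π p * ψ (P * Q) ^ k = ψ a := by
      intro p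
      induction p using MvPolynomial.induction_on with
      | C a => exact ⟨0, C a, by simp [hψC]⟩
      | add p q hp hq =>
        obtain ⟨k, a, ha⟩ := hp
        obtain ⟨l, b, hb⟩ := hq
        refine ⟨k + l, a * (P * Q) ^ l + b * (P * Q) ^ k, ?_⟩
        rw [map_add, map_add, map_mul ψ a, map_mul ψ b, ← ha, ← hb, map_pow, map_pow]
        ring
      | mul_X p i hp =>
        obtain ⟨k, a, ha⟩ := hp
        induction i using Fin.lastCases with
        | last =>
          refine ⟨k + 1, a * (C c * P * P), ?_⟩
          rw [map_mul, map_mul ψ a, map_mul ψ (C c * P), ← ha, ← hlast, Fin.succ_last,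
            map_mul ψ P]
          ring
        | cast i =>
          refine ⟨k, a * X i, ?_⟩
          rw [map_mul, map_mul ψ a, ← ha, hψX]
          ring
    have hall : ∀ w, ∃ (k : ℕ) (a : A), w * ψ (P * Q) ^ k = ψ a := by
      intro w
      obtain ⟨m, x, hx⟩ := hsurj w
      obtain ⟨k, a, ha⟩ := hpoly x
      refine ⟨m + k, a * Q ^ m, ?_⟩
      rw [map_mul ψ a, ← ha, ← hx, ← hψP, map_pow, map_mul]
      ring
    obtain ⟨H, hH, hHC, hHT, hHU⟩ := exists_formSubgroup
      (Units.map (π.comp C).toMonoidHom) (fun i => (hT i).unit) (fun j => (hU j).unit)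
    have hfu : ∀ x, ∃ g ∈ H, (g : S) = ψ (f x) := by
      rintro (i | j)
      · exact ⟨_, hHT i, by simp [f, primeFam, hψ0, hψC]⟩
      · exact ⟨_, hHU j.castSucc, by simp only [f, primeFam, Sum.elim_inr, hψj, IsUnit.unit_spec]⟩
    choose g hgH hg using hfu
    intro w
    apply hH
    obtain ⟨k, a, ha⟩ := hall w
    obtain ⟨l, b, hb⟩ := hall (w⁻¹ : Sˣ)
    have hab : a * b = 1 * ∏ x : (Fin r ⊕ Fin N) × Fin (k + l), f x.1 := by
      rw [Fintype.prod_prod_type, one_mul]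
      simp only [Finset.prod_const, Finset.card_univ, Fintype.card_fin, Finset.prod_pow]
      rw [hPQ]
      apply hψinj
      rw [map_mul, ← ha, ← hb, map_pow, pow_add]
      have := w.mul_inv
      linear_combination (ψ (P * Q)) ^ k * (ψ (P * Q)) ^ l * this
    obtain ⟨t, -, b1, c1, -, -, h1, hat, -⟩ := mul_eq_mul_prime_prod
      (fun x _ => hf x.1) hab
    obtain ⟨b0, hb0, rfl⟩ := isUnit_iff_eq_C_of_isReduced.mp (IsUnit.of_mul_eq_one _ h1.symm)
    have hw : w * (∏ x, g x) ^ k =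
        Units.map (π.comp C).toMonoidHom hb0.unit * ∏ x ∈ t, g x.1 := by
      ext
      rw [← hPQ, hat] at ha
      simpa [hg, hψC, map_prod] using ha
    rw [eq_mul_inv_of_mul_eq hw]
    exact H.mul_mem (H.mul_mem (hHC _) (H.prod_mem fun x _ => hgH _))
      (H.inv_mem (H.pow_mem (H.prod_mem fun x _ => hgH _) _))
  · intro c' e m h
    have h1 := congrArg (Units.map φ.toMonoidHom) h
    have h2 := congrArg (Units.val) h1
    have hmz : ∀ (x : S) (hx : IsUnit x) (z : ℤ),
        (((Units.map φ.toMonoidHom hx.unit) ^ z : Kˣ) : K) = φ x ^ z := by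
      intro x hx z
      rw [Units.val_zpow_eq_zpow_val]
      rfl
    simp only [map_mul, map_prod, map_zpow, map_one, Units.val_mul, Units.coe_prod, hmz,
      Units.val_one] at h2
    have h3 : ((Units.map φ.toMonoidHom (Units.map (π.comp C).toMonoidHom c') : Kˣ) : K)
        = algebraMap A K (C (c' : F)) := by
      rw [← hθC, ← hφ]; rfl
    rw [h3] at h2
    simp only [hφ] at h2
    rw [Fin.prod_univ_castSucc, hθl] at h2
    simp only [map_sub, hθ0, hθC, hθj] at h2
    set s := m (Fin.last N) with hs
    have hcK : algebraMap A K (C c) ≠ 0 := by simpa using hc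
    let u : Aˣ := Units.map (C : F →+* A).toMonoidHom (c' * (Units.mk0 c hc) ^ s)
    have hu : algebraMap A K u = algebraMap A K (C (c' : F)) * algebraMap A K (C c) ^ s := by
      have : algebraMap A K u = ((algebraMap A K).comp C) ((c' : F) * c ^ s) := by
        have h4 : ((c' * (Units.mk0 c hc) ^ s : Fˣ) : F) = (c' : F) * c ^ s := by
          rw [Units.val_mul, Units.val_zpow_eq_zpow_val, Units.val_mk0]
        rw [← h4]
        rfl
      rw [this, map_mul, map_zpow₀]; rfl
    let z : Fin r ⊕ Fin N → ℤ := Sum.elim (fun i => e i + s) (fun j => m j.castSucc - s)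
    have hfK : ∀ x, algebraMap A K (f x) ≠ 0 := fun x => by simpa using (hf x).ne_zero
    have hz := exps_zero (K := K) f hf hd u z (by
      rw [← h2, hu, Fintype.prod_sum_type]
      have e1 : ∏ i, algebraMap A K (f (Sum.inl i)) ^ z (Sum.inl i) =
          (∏ i, (algebraMap A K (X 0) - algebraMap A K (C (η i))) ^ e i) *
            algebraMap A K P ^ s := by
        simp only [P, map_prod]
        rw [← Finset.prod_zpow, ← Finset.prod_mul_distrib]
        refine Finset.prod_congr rfl fun i _ => ?_
        change _ ^ (e i + s) = _
        rw [zpow_add₀ (hfK _)]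
        simp [f, primeFam]
      have e2 : ∏ j, algebraMap A K (f (Sum.inr j)) ^ z (Sum.inr j) =
          (∏ j : Fin N, algebraMap A K (X j.succ) ^ m j.castSucc) * (algebraMap A K Q ^ s)⁻¹ := by
        simp only [Q, map_prod]
        rw [← Finset.prod_zpow, ← Finset.prod_inv_distrib, ← Finset.prod_mul_distrib]
        refine Finset.prod_congr rfl fun j _ => ?_
        change _ ^ (m j.castSucc - s) = _
        rw [zpow_sub₀ (hfK _)]
        simp [f, primeFam, div_eq_mul_inv]
      rw [e1, e2]
      simp only [al, map_mul, mul_zpow, div_eq_mul_inv, inv_zpow]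
      ring)
    refine ⟨-s, fun i => ?_, fun j => ?_⟩
    · have := hz (Sum.inl i)
      simp only [z, Sum.elim_inl] at this
      omega
    · induction j using Fin.lastCases with
      | last => simp [hs]
      | cast j =>
        have := hz (Sum.inr j)
        simp only [z, Sum.elim_inr] at this
        omega

/-- Structure of `k̄[U]^×/k̄^×` in the proof of Proposition 3.2 (Derenthal–Smeets–Wei):
the elements `t − ηᵢ` and `uⱼ` are units of `R'`; every unit of `R'` is of the form
`c'·∏ᵢ(t − ηᵢ)^{eᵢ}·∏ⱼ uⱼ^{mⱼ}` with `c' ∈ F^×`, `eᵢ, mⱼ ∈ ℤ`; and such a product is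
a (nonzero) constant exactly along the single relation `Σᵢ[t − ηᵢ] = Σⱼ[uⱼ]`, so that
`R'^×/F^×` is free abelian of rank `r + n − 1` on these classes. -/
theorem units_of_coordinate_ring_of_U
    (F : Type) [Field F] [IsAlgClosed F] [CharZero F] (c : F) (hc : c ≠ 0)
    (r n : ℕ) (hr : 1 ≤ r) (hn : 1 ≤ n) (η : Fin r → F) (hη : Function.Injective η) :
    ∃ (hT : ∀ i, IsUnit (tFactor F c r n η i)) (hU : ∀ j, IsUnit (uFactor F c r n η j)),
      (∀ w : (coordRingU F c r n η)ˣ,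
        ∃ (c' : Fˣ) (e : Fin r → ℤ) (m : Fin n → ℤ),
          w = Units.map (constMap F c r n η).toMonoidHom c' *
            (∏ i, (hT i).unit ^ e i) * ∏ j, (hU j).unit ^ m j) ∧
      (∀ (c' : Fˣ) (e : Fin r → ℤ) (m : Fin n → ℤ),
        Units.map (constMap F c r n η).toMonoidHom c' *
            (∏ i, (hT i).unit ^ e i) * ∏ j, (hU j).unit ^ m j = 1 →
          ∃ s : ℤ, (∀ i, e i = s) ∧ ∀ j, m j = -s) := by
  obtain ⟨N, rfl⟩ : ∃ N, n = N + 1 := ⟨n - 1, by omega⟩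
  let I := Ideal.span {normFormPoly F c r (N + 1) η}
  let P : coordRing F c r (N + 1) η := Ideal.Quotient.mk I (∏ i : Fin r, (X 0 - C (η i)))
  refine units_core F c hc r N η hη (coordRingU F c r (N + 1) η)
    ((algebraMap (coordRing F c r (N + 1) η) (coordRingU F c r (N + 1) η)).comp
      (Ideal.Quotient.mk I)) ?_ ?_ ?_ ?_
  · rw [RingHom.comp_apply, Ideal.Quotient.eq_zero_iff_mem.mpr
      (Ideal.subset_span (Set.mem_singleton _)), map_zero]
  · exact IsLocalization.Away.algebraMap_isUnit P
  · intro w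
    obtain ⟨k, a, ha⟩ := IsLocalization.Away.surj P w
    obtain ⟨x, rfl⟩ := Ideal.Quotient.mk_surjective a
    exact ⟨k, x, ha⟩
  · intro θ h0 hP
    have hI : ∀ a ∈ I, θ a = 0 := by
      intro a ha
      obtain ⟨b, rfl⟩ := Ideal.mem_span_singleton.mp ha
      rw [map_mul, h0, zero_mul]
    have hPu : IsUnit (Ideal.Quotient.lift I θ hI P) := by
      rw [Ideal.Quotient.lift_mk]
      exact IsUnit.mk0 _ hP
    refine ⟨IsLocalization.Away.lift P hPu, fun p => ?_⟩
    rw [RingHom.comp_apply, IsLocalization.Away.lift_eq, Ideal.Quotient.lift_mk]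
end

section
/- Let k be a field of characteristic 0, let a ∈ k be a non-square, let K/k be a finite field extension containing α with α² = a, and set L = k(α) ⊆ K. Let σ denote the nontrivial element of Gal(L/k) and let ρ ∈ L be nonzero. For every commutative k-algebra B, write N₁ : (K ⊗_k B)^× → (L ⊗_k B)^× for the algebra norm of K ⊗_k B over L ⊗_k B and N₂ : (K ⊗_k B)^× → B^× for the algebra norm of K ⊗_k B over B, and let σ_B = σ ⊗ id_B act on L ⊗_k B. Then the map (t, x₁, x₂) ↦ (t, x₂⁻¹, x₁x₂⁻¹) is a bijection from the set {(t, x₁, x₂) ∈ B × (K ⊗_k B)^× × (K ⊗_k B)^× : (1⊗t) − (α⊗1) = (ρ⊗1)·N₁(x₁)·σ_B(N₁(x₂)) in L ⊗_k B} onto the set {(t, w, y) ∈ B × (K ⊗_k B)^× × (K ⊗_k B)^× : N₂(w)·((1⊗t) − (α⊗1)) = (ρ⊗1)·N₁(y) in L ⊗_k B}, with inverse (t, w, y) ↦ (t, w⁻¹y, w⁻¹). (The isomorphism T_U ≅ Y in the split case of the proof of Proposition 4.1.) -/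
open IntermediateField TensorProduct

attribute [local instance] Algebra.TensorProduct.rightAlgebra

/-- The algebra norm of `K ⊗_k B` over `L ⊗_k B`, for an intermediate field
`L` of `K/k` and a commutative `k`-algebra `B`; the `(L ⊗_k B)`-algebra structure
on `K ⊗_k B` is induced by the inclusion `L → K`. -/
noncomputable def normTensor (k K : Type) [Field k] [Field K] [Algebra k K]
    (L : IntermediateField k K) (B : Type) [CommRing B] [Algebra k B] :
    (K ⊗[k] B) →* (↥L ⊗[k] B) :=
  @Algebra.norm (↥L ⊗[k] B) (K ⊗[k] B) _ _
    ((Algebra.TensorProduct.map L.val (AlgHom.id k B)).toRingHom).toAlgebra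

section Helpers

/-- The commutativity equivalence as a linear map for the right algebra structure. -/
noncomputable def commRight (R A C : Type) [CommRing R] [CommRing A] [CommRing C]
    [Algebra R A] [Algebra R C] : (C ⊗[R] A) ≃ₗ[C] (A ⊗[R] C) :=
  { (Algebra.TensorProduct.comm R C A).toLinearEquiv.toAddEquiv with
    map_smul' := by
      intro c x
      change Algebra.TensorProduct.comm R C A (c • x) = c • Algebra.TensorProduct.comm R C A x
      rw [Algebra.smul_def, Algebra.smul_def, map_mul]
      congr 1 }

/-- Basis of `A ⊗ C` over `C`. -/
noncomputable def basisRight {ι : Type} (R A C : Type) [CommRing R] [CommRing A] [CommRing C]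
    [Algebra R A] [Algebra R C] (b : Module.Basis ι R A) : Module.Basis ι C (A ⊗[R] C) :=
  (Algebra.TensorProduct.basis C b).map (commRight R A C)

lemma basisRight_apply {ι : Type} (R A C : Type) [CommRing R] [CommRing A] [CommRing C]
    [Algebra R A] [Algebra R C] (b : Module.Basis ι R A) (i : ι) :
    basisRight R A C b i = b i ⊗ₜ[R] (1 : C) := by
  simp only [basisRight, Module.Basis.map_apply, Algebra.TensorProduct.basis_apply]
  rfl

lemma free_tensor (k L K : Type) [Field k] [Field L] [Field K] [Algebra k K] [Algebra k L]
    [Algebra L K] [IsScalarTower k L K] (B : Type) [CommRing B] [Algebra k B]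
    [Algebra (L ⊗[k] B) (K ⊗[k] B)]
    (h : ∀ r : L ⊗[k] B, algebraMap (L ⊗[k] B) (K ⊗[k] B) r =
      Algebra.TensorProduct.map (IsScalarTower.toAlgHom k L K) (AlgHom.id k B) r) :
    Module.Free (L ⊗[k] B) (K ⊗[k] B) := by
  let e := Algebra.TensorProduct.cancelBaseChange k L L K B
  have he : ∀ r : L ⊗[k] B, e (1 ⊗ₜ[L] r) =
      Algebra.TensorProduct.map (IsScalarTower.toAlgHom k L K) (AlgHom.id k B) r := by
    intro r
    induction r with
    | zero => simp
    | add x y hx hy => rw [TensorProduct.tmul_add, map_add, map_add, hx, hy]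
    | tmul l b =>
      simp only [e, Algebra.TensorProduct.cancelBaseChange_tmul,
        Algebra.TensorProduct.map_tmul]
      simp [Algebra.smul_def]
  let e' : (K ⊗[L] (L ⊗[k] B)) ≃ₗ[L ⊗[k] B] (K ⊗[k] B) :=
    { e.toLinearEquiv.toAddEquiv with
      map_smul' := by
        intro r x
        change e (r • x) = r • e x
        rw [Algebra.smul_def, Algebra.smul_def, map_mul, h, ← he]
        rfl }
  exact Module.Free.of_basis
    ((basisRight L K (L ⊗[k] B) (Module.Free.chooseBasis L K)).map e')

lemma norm_trans_aux (k L K : Type) [Field k] [Field L] [Field K] [Algebra k K] [Algebra k L]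
    [Algebra L K] [IsScalarTower k L K] (B : Type) [CommRing B] [Algebra k B]
    [Algebra (L ⊗[k] B) (K ⊗[k] B)]
    (h : ∀ r : L ⊗[k] B, algebraMap (L ⊗[k] B) (K ⊗[k] B) r =
      Algebra.TensorProduct.map (IsScalarTower.toAlgHom k L K) (AlgHom.id k B) r)
    (x : K ⊗[k] B) :
    Algebra.norm B (Algebra.norm (L ⊗[k] B) x) = Algebra.norm B x := by
  have : Module.Free (L ⊗[k] B) (K ⊗[k] B) := free_tensor k L K B h
  have : Module.Free B (L ⊗[k] B) :=
    Module.Free.of_basis (basisRight k L B (Module.Free.chooseBasis k L))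
  have : IsScalarTower B (L ⊗[k] B) (K ⊗[k] B) := by
    refine IsScalarTower.of_algebraMap_eq fun b => ?_
    rw [h]
    change (1 : K) ⊗ₜ[k] b = Algebra.TensorProduct.map (IsScalarTower.toAlgHom k L K)
      (AlgHom.id k B) ((1 : L) ⊗ₜ[k] b)
    simp
  exact Algebra.norm_norm

lemma norm_trans (k K : Type) [Field k] [Field K] [Algebra k K]
    (L : IntermediateField k K) (B : Type) [CommRing B] [Algebra k B] (x : K ⊗[k] B) :
    Algebra.norm B (normTensor k K L B x) = Algebra.norm B x :=
  @norm_trans_aux k L K _ _ _ _ _ _ _ B _ _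
    ((Algebra.TensorProduct.map L.val (AlgHom.id k B)).toRingHom).toAlgebra (fun _ => rfl) x

lemma exists_basis (k K : Type) [Field k] [Field K] [Algebra k K]
    (a : k) (ha : ¬∃ x : k, x ^ 2 = a) (α : K) (hα : α ^ 2 = algebraMap k K a) :
    ∃ b : Module.Basis (Fin 2) k k⟮α⟯, b 0 = 1 ∧ b 1 = AdjoinSimple.gen k α := by
  have hirr : Irreducible (Polynomial.X ^ 2 - Polynomial.C a) := by
    refine X_pow_sub_C_irreducible_of_prime Nat.prime_two fun x hx => ha ⟨x, hx⟩
  have hmonic : (Polynomial.X ^ 2 - Polynomial.C a).Monic :=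
    Polynomial.monic_X_pow_sub_C a two_ne_zero
  have hmin := minpoly.eq_of_irreducible_of_monic (x := α) hirr (by simp [hα]) hmonic
  have hint : IsIntegral k α := ⟨_, hmonic, by simp [hα]⟩
  have hd : (adjoin.powerBasis hint).dim = 2 := by
    rw [adjoin.powerBasis_dim, ← hmin, Polynomial.natDegree_X_pow_sub_C]
  refine ⟨(adjoin.powerBasis hint).basis.reindex (finCongr hd), ?_, ?_⟩
  · simp
  · simp

lemma norm_quad_aux (k L : Type) [Field k] [Field L] [Algebra k L]
    (a : k) (g : L) (hgg : g * g = algebraMap k L a) (b : Module.Basis (Fin 2) k L)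
    (hb0 : b 0 = 1) (hb1 : b 1 = g)
    (σ : L ≃ₐ[k] L) (hσ : σ g = -g)
    (B : Type) [CommRing B] [Algebra k B] (z : L ⊗[k] B) :
    (1 : L) ⊗ₜ[k] Algebra.norm B z =
      z * Algebra.TensorProduct.map σ.toAlgHom (AlgHom.id k B) z := by
  let b' := basisRight k L B b
  have h0 : b' 0 = 1 := by rw [basisRight_apply, hb0]; rfl
  have h1 : b' 1 = g ⊗ₜ[k] (1 : B) := by rw [basisRight_apply, hb1]
  have hsq : b' 1 * b' 1 = (algebraMap k B a) • b' 0 := by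
    rw [h1, h0, Algebra.TensorProduct.tmul_mul_tmul, hgg, Algebra.smul_def, mul_one, mul_one]
    change _ = (1 : L) ⊗ₜ[k] (algebraMap k B a)
    rw [Algebra.algebraMap_eq_smul_one, Algebra.algebraMap_eq_smul_one, TensorProduct.smul_tmul]
  obtain ⟨u, v, hz⟩ : ∃ u v : B, z = u • b' 0 + v • b' 1 :=
    ⟨b'.repr z 0, b'.repr z 1, by rw [← Fin.sum_univ_two (fun i => b'.repr z i • b' i), b'.sum_repr]⟩
  have hM : Algebra.leftMulMatrix b' (b' 1) = !![0, algebraMap k B a; 1, 0] := by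
    ext i j
    rw [Algebra.leftMulMatrix_eq_repr_mul]
    fin_cases j
    · simp only [Fin.zero_eta]
      rw [h0, mul_one, b'.repr_self]
      fin_cases i <;> simp
    · simp only [Fin.mk_one]
      rw [hsq, map_smul, b'.repr_self]
      fin_cases i <;> simp [Algebra.algebraMap_eq_smul_one]
  have hN : Algebra.norm B z = u * u - algebraMap k B a * (v * v) := by
    rw [Algebra.norm_eq_matrix_det b', hz, map_add, map_smul, map_smul, hM, h0, map_one,
      Matrix.det_fin_two]
    simp
    ring
  have hs : ∀ c : B, Algebra.TensorProduct.map σ.toAlgHom (AlgHom.id k B)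
      (algebraMap B (L ⊗[k] B) c) = algebraMap B (L ⊗[k] B) c := by
    intro c
    change Algebra.TensorProduct.map σ.toAlgHom (AlgHom.id k B) ((1 : L) ⊗ₜ[k] c)
      = (1 : L) ⊗ₜ[k] c
    simp
  have hs1 : Algebra.TensorProduct.map σ.toAlgHom (AlgHom.id k B) (b' 1) = - b' 1 := by
    rw [h1, Algebra.TensorProduct.map_tmul, ← TensorProduct.neg_tmul, ← hσ]
    rfl
  change algebraMap B (L ⊗[k] B) _ = _
  rw [hN, hz]
  rw [h0, Algebra.smul_def, mul_one] at hsq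
  simp only [h0, Algebra.smul_def, mul_one, map_add, map_mul, map_sub, hs, hs1]
  linear_combination (- algebraMap B (L ⊗[k] B) v ^ 2) * (- hsq)

lemma norm_quad (k K : Type) [Field k] [Field K] [Algebra k K]
    (a : k) (ha : ¬∃ x : k, x ^ 2 = a) (α : K) (hα : α ^ 2 = algebraMap k K a)
    (σ : ↥k⟮α⟯ ≃ₐ[k] ↥k⟮α⟯)
    (hσ : σ (AdjoinSimple.gen k α) = -AdjoinSimple.gen k α)
    (B : Type) [CommRing B] [Algebra k B] (z : ↥k⟮α⟯ ⊗[k] B) :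
    (1 : ↥k⟮α⟯) ⊗ₜ[k] Algebra.norm B z =
      z * Algebra.TensorProduct.map σ.toAlgHom (AlgHom.id k B) z := by
  obtain ⟨b, hb0, hb1⟩ := exists_basis k K a ha α hα
  have hgg : AdjoinSimple.gen k α * AdjoinSimple.gen k α = algebraMap k _ a := by
    apply Subtype.ext
    simpa [sq] using hα
  exact norm_quad_aux k k⟮α⟯ a _ hgg b hb0 hb1 σ hσ B z

end Helpers

/-- The isomorphism `T_U ≅ Y` in the split case of the proof of Proposition 4.1
(Derenthal–Smeets–Wei): for every commutative `k`-algebra `B`, the substitution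
`(t, x₁, x₂) ↦ (t, x₂⁻¹, x₁x₂⁻¹)` is a bijection from the `B`-points of
`t − α = ρ·N₁(x₁)·σ(N₁(x₂))` onto the `B`-points of `N₂(w)(t − α) = ρ·N₁(y)`,
with inverse `(t, w, y) ↦ (t, w⁻¹y, w⁻¹)`. -/
theorem torsor_substitution_split_case
    (k K : Type) [Field k] [CharZero k] [Field K] [Algebra k K] [FiniteDimensional k K]
    (a : k) (ha : ¬∃ x : k, x ^ 2 = a)
    (α : K) (hα : α ^ 2 = algebraMap k K a)
    (σ : ↥k⟮α⟯ ≃ₐ[k] ↥k⟮α⟯)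
    (hσ : σ (AdjoinSimple.gen k α) = -AdjoinSimple.gen k α)
    (ρ : ↥k⟮α⟯) (hρ : ρ ≠ 0)
    (B : Type) [CommRing B] [Algebra k B] :
    Set.BijOn
      (fun p : B × (K ⊗[k] B)ˣ × (K ⊗[k] B)ˣ => (p.1, p.2.2⁻¹, p.2.1 * p.2.2⁻¹))
      {p : B × (K ⊗[k] B)ˣ × (K ⊗[k] B)ˣ |
        ((1 : ↥k⟮α⟯) ⊗ₜ[k] p.1) - (AdjoinSimple.gen k α ⊗ₜ[k] (1 : B)) =
          (ρ ⊗ₜ[k] (1 : B)) * normTensor k K k⟮α⟯ B ↑p.2.1 *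
            Algebra.TensorProduct.map σ.toAlgHom (AlgHom.id k B)
              (normTensor k K k⟮α⟯ B ↑p.2.2)}
      {p : B × (K ⊗[k] B)ˣ × (K ⊗[k] B)ˣ |
        ((1 : ↥k⟮α⟯) ⊗ₜ[k] Algebra.norm B (↑p.2.1 : K ⊗[k] B)) *
            (((1 : ↥k⟮α⟯) ⊗ₜ[k] p.1) - (AdjoinSimple.gen k α ⊗ₜ[k] (1 : B))) =
          (ρ ⊗ₜ[k] (1 : B)) * normTensor k K k⟮α⟯ B ↑p.2.2} ∧
    Set.InvOn
      (fun p : B × (K ⊗[k] B)ˣ × (K ⊗[k] B)ˣ => (p.1, p.2.1⁻¹ * p.2.2, p.2.1⁻¹))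
      (fun p : B × (K ⊗[k] B)ˣ × (K ⊗[k] B)ˣ => (p.1, p.2.2⁻¹, p.2.1 * p.2.2⁻¹))
      {p : B × (K ⊗[k] B)ˣ × (K ⊗[k] B)ˣ |
        ((1 : ↥k⟮α⟯) ⊗ₜ[k] p.1) - (AdjoinSimple.gen k α ⊗ₜ[k] (1 : B)) =
          (ρ ⊗ₜ[k] (1 : B)) * normTensor k K k⟮α⟯ B ↑p.2.1 *
            Algebra.TensorProduct.map σ.toAlgHom (AlgHom.id k B)
              (normTensor k K k⟮α⟯ B ↑p.2.2)}
      {p : B × (K ⊗[k] B)ˣ × (K ⊗[k] B)ˣ |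
        ((1 : ↥k⟮α⟯) ⊗ₜ[k] Algebra.norm B (↑p.2.1 : K ⊗[k] B)) *
            (((1 : ↥k⟮α⟯) ⊗ₜ[k] p.1) - (AdjoinSimple.gen k α ⊗ₜ[k] (1 : B))) =
          (ρ ⊗ₜ[k] (1 : B)) * normTensor k K k⟮α⟯ B ↑p.2.2} := by
  have key : ∀ x : K ⊗[k] B, (1 : ↥k⟮α⟯) ⊗ₜ[k] Algebra.norm B x =
      normTensor k K k⟮α⟯ B x *
        Algebra.TensorProduct.map σ.toAlgHom (AlgHom.id k B) (normTensor k K k⟮α⟯ B x) := by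
    intro x
    rw [← norm_trans k K k⟮α⟯ B x]
    exact norm_quad k K a ha α hα σ hσ B _
  have hinv : ∀ u : (K ⊗[k] B)ˣ, normTensor k K k⟮α⟯ B ↑u * normTensor k K k⟮α⟯ B ↑u⁻¹ = 1 := by
    intro u
    rw [← map_mul, Units.mul_inv, map_one]
  have hinv' : ∀ u : (K ⊗[k] B)ˣ,
      Algebra.TensorProduct.map σ.toAlgHom (AlgHom.id k B) (normTensor k K k⟮α⟯ B ↑u) *
      Algebra.TensorProduct.map σ.toAlgHom (AlgHom.id k B) (normTensor k K k⟮α⟯ B ↑u⁻¹) = 1 := by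
    intro u
    rw [← map_mul, hinv, map_one]
  refine (fun h => ⟨h.2.bijOn h.1.1 h.1.2, h.2⟩ : (_ ∧ _) ∧ _ → _) ⟨⟨?_, ?_⟩, ?_, ?_⟩
  · rintro ⟨t, x, y⟩ h
    simp only [Set.mem_setOf_eq] at h ⊢
    rw [h, key, Units.val_mul, map_mul]
    linear_combination (ρ ⊗ₜ[k] (1 : B)) * normTensor k K k⟮α⟯ B ↑x *
      normTensor k K k⟮α⟯ B ↑y⁻¹ * hinv' y
  · rintro ⟨t, w, y⟩ h
    simp only [Set.mem_setOf_eq] at h ⊢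
    rw [key] at h
    rw [Units.val_mul, map_mul]
    have h1 := hinv w
    have h2 := hinv' w
    generalize normTensor k K k⟮α⟯ B ↑w⁻¹ = p at *
    generalize normTensor k K k⟮α⟯ B ↑w = q at *
    generalize Algebra.TensorProduct.map σ.toAlgHom (AlgHom.id k B) p = p' at *
    generalize Algebra.TensorProduct.map σ.toAlgHom (AlgHom.id k B) q = q' at *
    generalize ((1 : ↥k⟮α⟯) ⊗ₜ[k] t) - (AdjoinSimple.gen k α ⊗ₜ[k] (1 : B)) = T at *
    linear_combination p * p' * h - T * h1 * (q' * p') - T * h2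
  · rintro ⟨t, x, y⟩ -
    simp
  · rintro ⟨t, w, y⟩ -
    simp
end
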